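/- Let n ≥ 1 and let S, T, U ⊆ {1,…,n−1}. Then the unique coefficients N in the expansions d_A·d_B = ∑_W N_{A,B}^W d_W (over subsets W of {1,…,n}) satisfy: (a) N_{S,T}^{{n}∪U} = N_{{n}∪S,T}^{U} = N_{S,{n}∪T}^{U} = N_{{n}∪S,{n}∪T}^{{n}∪U} = 0; (b) N_{{n}∪S,T}^{{n}∪U} = N_{S,{n}∪T}^{{n}∪U} = N_{S,T}^{U}; (c) if U ≠ ∅ then N_{{n}∪S,{n}∪T}^{U} = N_{S,T}^{{1+max U,…,n−1} ∪ (U∖{max U})} + 2·∑_{k=max U}^{n−1} N_{S,T}^{{k+1,…,n−1} ∪ U}; and (d) N_{{n}∪S,{n}∪T}^{∅} = 2·∑_{k=0}^{n−1} N_{S,T}^{{k+1,…,n−1}}. -/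

import Mathlib

open Real

/-- `c j = 2·cos(π/2^(j+1))` (so `c 0 = 0`). -/
noncomputable def c (j : ℕ) : ℝ := 2 * Real.cos (π / 2 ^ (j + 1))

/-- `d S = ∏_{j ∈ S} c j` (so `d ∅ = 1`). -/
noncomputable def d (S : Finset ℕ) : ℝ := ∏ j ∈ S, c j

open Polynomial in
/-- The polynomials with `c (n - k) = nestedPoly k` evaluated at `c n`, for `k ≤ n`. -/
noncomputable def nestedPoly : ℕ → ℤ[X]
  | 0 => X
  | k + 1 => nestedPoly k ^ 2 - 2

/-- The coefficient of `d U` in `c m * ∑ W ⊆ {1,…,m}, M W * d W`. -/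
def mulCoeff (m : ℕ) (M : Finset ℕ → ℚ) (U : Finset ℕ) : ℚ :=
  (if U.Nonempty then M (Finset.Icc (U.sup id + 1) m ∪ U.erase (U.sup id)) else 0) +
    2 * ∑ k ∈ Finset.Ico (U.sup id) m, M (Finset.Icc (k + 1) m ∪ U)

lemma c_zero : c 0 = 0 := by simp [c]

lemma c_succ_sq (j : ℕ) : c (j + 1) ^ 2 = 2 + c j := by
  have h : π / 2 ^ (j + 1) = 2 * (π / 2 ^ (j + 1 + 1)) := by
    field_simp
    ring
  rw [c, c, h, Real.cos_two_mul]
  ring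

section LinearIndependence

open Polynomial

lemma nestedPoly_monic_natDegree (k : ℕ) :
    (nestedPoly k).Monic ∧ (nestedPoly k).natDegree = 2 ^ k := by
  induction k with
  | zero => exact ⟨monic_X, natDegree_X⟩
  | succ k ih =>
    have hd : (nestedPoly k ^ 2).natDegree = 2 ^ (k + 1) := by
      rw [ih.1.natDegree_pow, ih.2, pow_succ, mul_comm]
    have hlt : (2 : ℤ[X]).natDegree < (nestedPoly k ^ 2).natDegree := by
      rw [hd, show (2 : ℤ[X]) = C 2 from rfl, natDegree_C]
      positivity
    exact ⟨(ih.1.pow 2).sub_of_left (degree_lt_degree hlt),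
      (natDegree_sub_eq_left_of_natDegree_lt hlt).trans hd⟩

lemma map_nestedPoly_zmod_two (k : ℕ) :
    (nestedPoly k).map (Int.castRingHom (ZMod 2)) = X ^ 2 ^ k := by
  induction k with
  | zero => simp [nestedPoly]
  | succ k ih =>
    have h2 : (2 : (ZMod 2)[X]) = 0 := CharTwo.two_eq_zero
    simp [nestedPoly, ih, h2, ← pow_mul, pow_succ (2 : ℕ) k]

lemma coeff_zero_nestedPoly_succ (k : ℕ) :
    (nestedPoly (k + 1)).coeff 0 = -2 ∨ (nestedPoly (k + 1)).coeff 0 = 2 := by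
  simp only [coeff_zero_eq_eval_zero]
  induction k with
  | zero => left; simp [nestedPoly]
  | succ k ih =>
    right
    rw [nestedPoly]
    rcases ih with h | h <;> simp [h]

lemma nestedPoly_irreducible (k : ℕ) : Irreducible (nestedPoly k) := by
  obtain _ | k := k
  · exact irreducible_X
  have hmd := nestedPoly_monic_natDegree (k + 1)
  have hprime : (Ideal.span {(2 : ℤ)}).IsPrime :=
    (Ideal.span_singleton_prime two_ne_zero).2 Int.prime_two
  refine IsEisensteinAt.irreducible (𝓟 := Ideal.span {(2 : ℤ)}) ⟨?_, ?_, ?_⟩ hprime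
    hmd.1.isPrimitive (by rw [hmd.2]; positivity)
  · rw [hmd.1.leadingCoeff, Ideal.mem_span_singleton]
    norm_num
  · intro i hi
    rw [hmd.2] at hi
    have h := congrArg (fun p => coeff p i) (map_nestedPoly_zmod_two (k + 1))
    simp only [coeff_map, coeff_X_pow, hi.ne, if_false] at h
    rw [Ideal.mem_span_singleton]
    exact (ZMod.intCast_zmod_eq_zero_iff_dvd _ 2).1 h
  · rw [Ideal.span_singleton_pow, Ideal.mem_span_singleton]
    rcases coeff_zero_nestedPoly_succ k with h | h <;> rw [h] <;> norm_num

lemma aeval_nestedPoly (k j : ℕ) : aeval (c (j + k)) (nestedPoly k) = c j := by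
  induction k generalizing j with
  | zero => simp [nestedPoly]
  | succ k ih =>
    have h := ih (j + 1)
    rw [show j + 1 + k = j + (k + 1) by ring] at h
    rw [nestedPoly, map_sub, map_pow, h, map_ofNat, c_succ_sq]
    ring

lemma minpoly_c_natDegree (n : ℕ) : (minpoly ℚ (c n)).natDegree = 2 ^ n := by
  have hmd := nestedPoly_monic_natDegree n
  have hirr := (hmd.1.irreducible_iff_irreducible_map_fraction_map (K := ℚ)).1
    (nestedPoly_irreducible n)
  have h0 : aeval (c n) ((nestedPoly n).map (algebraMap ℤ ℚ)) = 0 := by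
    rw [aeval_map_algebraMap]
    simpa [c_zero] using aeval_nestedPoly n 0
  rw [← minpoly.eq_of_irreducible_of_monic hirr h0 (hmd.1.map _), hmd.1.natDegree_map, hmd.2]

/-- The numbers `d W`, `W ⊆ {1,…,n}`, are linearly independent over `ℚ`. -/
lemma coeff_eq_zero_of_sum_d_eq_zero {n : ℕ} {a : Finset ℕ → ℚ}
    (h : ∑ W ∈ (Finset.Icc 1 n).powerset, (a W : ℝ) * d W = 0)
    {W : Finset ℕ} (hW : W ⊆ Finset.Icc 1 n) : a W = 0 := by
  let Q : Finset ℕ → ℚ[X] := fun W => ∏ j ∈ W, (nestedPoly (n - j)).map (algebraMap ℤ ℚ)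
  have hmonic (W : Finset ℕ) : (Q W).Monic :=
    monic_prod_of_monic _ _ fun j _ => (nestedPoly_monic_natDegree _).1.map _
  have hinj : Set.InjOn (fun j => n - j) (Finset.Icc 1 n : Finset ℕ) := by
    intro i hi j hj hij
    simp only [Finset.coe_Icc, Set.mem_Icc] at hi hj hij
    omega
  have hdeg {W : Finset ℕ} (hW : W ⊆ Finset.Icc 1 n) :
      (Q W).natDegree = ∑ i ∈ W.image (n - ·), 2 ^ i := by
    rw [natDegree_prod_of_monic _ _ fun j _ => (nestedPoly_monic_natDegree _).1.map _,
      Finset.sum_image (hinj.mono (by exact_mod_cast hW))]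
    refine Finset.sum_congr rfl fun j _ => ?_
    rw [(nestedPoly_monic_natDegree _).1.natDegree_map, (nestedPoly_monic_natDegree _).2]
  have hlt {W : Finset ℕ} (hW : W ⊆ Finset.Icc 1 n) : (Q W).degree < (2 ^ n : ℕ) := by
    rw [degree_eq_natDegree (hmonic W).ne_zero, hdeg hW, Nat.cast_lt]
    refine Nat.geomSum_lt le_rfl fun k hk => ?_
    obtain ⟨j, hj, rfl⟩ := Finset.mem_image.1 hk
    have := Finset.mem_Icc.1 (hW hj)
    omega
  have heval {W : Finset ℕ} (hW : W ⊆ Finset.Icc 1 n) : aeval (c n) (Q W) = d W := by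
    rw [map_prod, d]
    refine Finset.prod_congr rfl fun j hj => ?_
    have hj' := Finset.mem_Icc.1 (hW hj)
    have := aeval_nestedPoly (n - j) j
    rwa [Nat.add_sub_cancel' hj'.2, ← aeval_map_algebraMap ℚ] at this
  let p : ℚ[X] := ∑ W ∈ (Finset.Icc 1 n).powerset, C (a W) * Q W
  have hp0 : aeval (c n) p = 0 := by
    rw [map_sum, ← h]
    refine Finset.sum_congr rfl fun W hW => ?_
    rw [map_mul, heval (Finset.mem_powerset.1 hW), aeval_C]
    rfl
  have hpdeg : p.degree = (Finset.Icc 1 n).powerset.sup fun W => (C (a W) * Q W).degree := by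
    refine degree_sum_eq_of_disjoint _ _ ?_
    rintro V ⟨hV, hV0⟩ W ⟨hW, hW0⟩ hne heq
    have hV' := Finset.mem_powerset.1 hV
    have hW' := Finset.mem_powerset.1 hW
    simp only [Function.comp_apply] at heq
    rw [degree_C_mul (fun h0 => hV0 (by simp [h0])), degree_C_mul (fun h0 => hW0 (by simp [h0]))]
      at heq
    have heq' := natDegree_eq_of_degree_eq heq
    rw [hdeg hV', hdeg hW'] at heq'
    have := Finset.geomSum_injective le_rfl heq'
    exact hne ((Finset.image_injOn_powerset_of_injOn hinj) hV hW this)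
  have hp : p = 0 := by
    by_contra hne
    have h1 := minpoly.degree_le_of_ne_zero ℚ (c n) hne hp0
    have hint : minpoly ℚ (c n) ≠ 0 := fun h0 => by
      have := minpoly_c_natDegree n
      rw [h0, natDegree_zero] at this
      exact (pow_pos two_pos n).ne this
    rw [degree_eq_natDegree hint, minpoly_c_natDegree, hpdeg] at h1
    refine absurd h1 (not_le.2 ?_)
    rw [Finset.sup_lt_iff (WithBot.bot_lt_coe _)]
    intro W hW
    rw [C_mul']
    exact (degree_smul_le _ _).trans_lt (hlt (Finset.mem_powerset.1 hW))
  rw [hp, degree_zero] at hpdeg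
  have := (Finset.sup_eq_bot_iff _ _).1 hpdeg.symm W (Finset.mem_powerset.2 hW)
  rw [degree_eq_bot, mul_eq_zero, C_eq_zero] at this
  exact this.resolve_right (hmonic W).ne_zero

end LinearIndependence

lemma succ_notMem_of_subset_Icc {m : ℕ} {W : Finset ℕ} (hW : W ⊆ Finset.Icc 1 m) :
    m + 1 ∉ W := fun h => by
  have := Finset.mem_Icc.1 (hW h)
  omega

lemma d_insert_succ {m : ℕ} {W : Finset ℕ} (hW : W ⊆ Finset.Icc 1 m) :
    d (insert (m + 1) W) = c (m + 1) * d W :=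
  Finset.prod_insert (succ_notMem_of_subset_Icc hW)

lemma Icc_one_succ (m : ℕ) : Finset.Icc 1 (m + 1) = insert (m + 1) (Finset.Icc 1 m) :=
  (Finset.insert_Icc_right_eq_Icc_add_one (by omega)).symm

/-- An expansion over the subsets of `{1,…,m+1}` splits according to membership of `m+1`. -/
lemma sum_powerset_Icc_succ (m : ℕ) (f : Finset ℕ → ℚ) :
    ∑ W ∈ (Finset.Icc 1 (m + 1)).powerset, (f W : ℝ) * d W =
      ∑ W ∈ (Finset.Icc 1 m).powerset, (f W : ℝ) * d W +
        c (m + 1) * ∑ W ∈ (Finset.Icc 1 m).powerset, (f (insert (m + 1) W) : ℝ) * d W := by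
  rw [Icc_one_succ, Finset.sum_powerset_insert (by simp), Finset.mul_sum]
  congr 1
  refine Finset.sum_congr rfl fun W hW => ?_
  rw [d_insert_succ (Finset.mem_powerset.1 hW)]
  ring

/-- Coefficients of expansions over the subsets of `{1,…,m+1}` are unique. -/
lemma coeff_eq_of_sum_eq {m : ℕ} {f g h : Finset ℕ → ℚ}
    (hf : ∑ W ∈ (Finset.Icc 1 (m + 1)).powerset, (f W : ℝ) * d W =
      ∑ W ∈ (Finset.Icc 1 m).powerset, (g W : ℝ) * d W +
        c (m + 1) * ∑ W ∈ (Finset.Icc 1 m).powerset, (h W : ℝ) * d W)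
    {U : Finset ℕ} (hU : U ⊆ Finset.Icc 1 m) : f U = g U ∧ f (insert (m + 1) U) = h U := by
  let k : Finset ℕ → ℚ := fun W => f W - if m + 1 ∈ W then h (W.erase (m + 1)) else g W
  have hkg {W : Finset ℕ} (hW : W ⊆ Finset.Icc 1 m) : k W = f W - g W := by
    simp [k, succ_notMem_of_subset_Icc hW]
  have hkh {W : Finset ℕ} (hW : W ⊆ Finset.Icc 1 m) :
      k (insert (m + 1) W) = f (insert (m + 1) W) - h W := by
    simp [k, Finset.erase_insert (succ_notMem_of_subset_Icc hW)]
  have hk : ∑ W ∈ (Finset.Icc 1 (m + 1)).powerset, (k W : ℝ) * d W = 0 := by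
    have h1 : ∑ W ∈ (Finset.Icc 1 m).powerset, (k W : ℝ) * d W =
        ∑ W ∈ (Finset.Icc 1 m).powerset, (f W : ℝ) * d W -
          ∑ W ∈ (Finset.Icc 1 m).powerset, (g W : ℝ) * d W := by
      rw [← Finset.sum_sub_distrib]
      refine Finset.sum_congr rfl fun W hW => ?_
      rw [hkg (Finset.mem_powerset.1 hW)]
      push_cast
      ring
    have h2 : ∑ W ∈ (Finset.Icc 1 m).powerset, (k (insert (m + 1) W) : ℝ) * d W =
        ∑ W ∈ (Finset.Icc 1 m).powerset, (f (insert (m + 1) W) : ℝ) * d W -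
          ∑ W ∈ (Finset.Icc 1 m).powerset, (h W : ℝ) * d W := by
      rw [← Finset.sum_sub_distrib]
      refine Finset.sum_congr rfl fun W hW => ?_
      rw [hkh (Finset.mem_powerset.1 hW)]
      push_cast
      ring
    rw [sum_powerset_Icc_succ] at hf
    rw [sum_powerset_Icc_succ, h1, h2]
    linear_combination hf
  have hU' : U ⊆ Finset.Icc 1 (m + 1) := hU.trans (Finset.Icc_subset_Icc_right (by omega))
  constructor
  · rw [← sub_eq_zero, ← hkg hU]
    exact coeff_eq_zero_of_sum_d_eq_zero hk hU'
  · rw [← sub_eq_zero, ← hkh hU]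
    exact coeff_eq_zero_of_sum_d_eq_zero hk (Finset.insert_subset (by simp) hU')

lemma mulCoeff_insert_succ {m : ℕ} (M : Finset ℕ → ℚ) {U : Finset ℕ}
    (hU : U ⊆ Finset.Icc 1 m) : mulCoeff (m + 1) M (insert (m + 1) U) = M U := by
  have hsup : (insert (m + 1) U).sup id = m + 1 := by
    rw [Finset.sup_insert, id, sup_eq_left]
    exact Finset.sup_le fun i hi => by
      have := Finset.mem_Icc.1 (hU hi)
      simp only [id]
      omega
  simp [mulCoeff, hsup, Finset.erase_insert (succ_notMem_of_subset_Icc hU)]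

lemma sup_id_le_of_subset_Icc {m : ℕ} {U : Finset ℕ} (hU : U ⊆ Finset.Icc 1 m) :
    U.sup id ≤ m :=
  Finset.sup_le fun _ hi => (Finset.mem_Icc.1 (hU hi)).2

lemma mulCoeff_succ {m : ℕ} (M : Finset ℕ → ℚ) {U : Finset ℕ} (hU : U ⊆ Finset.Icc 1 m) :
    mulCoeff (m + 1) M U =
      2 * M (insert (m + 1) U) + mulCoeff m (fun W => M (insert (m + 1) W)) U := by
  have hsup := sup_id_le_of_subset_Icc hU
  have hIcc (k : ℕ) (hk : k ≤ m) (V : Finset ℕ) :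
      Finset.Icc (k + 1) (m + 1) ∪ V = insert (m + 1) (Finset.Icc (k + 1) m ∪ V) := by
    rw [← Finset.insert_union, Finset.insert_Icc_right_eq_Icc_add_one (by omega)]
  rw [mulCoeff, mulCoeff, Finset.sum_Ico_succ_top hsup, hIcc _ hsup, hIcc _ le_rfl,
    Finset.sum_congr rfl fun k hk => by rw [hIcc k (Finset.mem_Ico.1 hk).2.le U]]
  simp only [Finset.Icc_eq_empty_of_lt (Nat.lt_succ_self m), Finset.empty_union]
  ring

lemma c_mul_sum (m : ℕ) (M : Finset ℕ → ℚ) :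
    c m * ∑ W ∈ (Finset.Icc 1 m).powerset, (M W : ℝ) * d W =
      ∑ U ∈ (Finset.Icc 1 m).powerset, (mulCoeff m M U : ℝ) * d U := by
  induction m generalizing M with
  | zero => simp [c_zero, mulCoeff]
  | succ m ih =>
    have h1 : ∑ U ∈ (Finset.Icc 1 m).powerset, (mulCoeff (m + 1) M U : ℝ) * d U =
        (2 + c m) * ∑ U ∈ (Finset.Icc 1 m).powerset, (M (insert (m + 1) U) : ℝ) * d U := by
      rw [add_mul, ih fun W => M (insert (m + 1) W), Finset.mul_sum, ← Finset.sum_add_distrib]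
      refine Finset.sum_congr rfl fun U hU => ?_
      rw [mulCoeff_succ M (Finset.mem_powerset.1 hU)]
      push_cast
      ring
    have h2 : ∑ U ∈ (Finset.Icc 1 m).powerset,
          (mulCoeff (m + 1) M (insert (m + 1) U) : ℝ) * d U =
        ∑ U ∈ (Finset.Icc 1 m).powerset, (M U : ℝ) * d U :=
      Finset.sum_congr rfl fun U hU => by
        rw [mulCoeff_insert_succ M (Finset.mem_powerset.1 hU)]
    rw [sum_powerset_Icc_succ, sum_powerset_Icc_succ, h1, h2]
    linear_combination
      (∑ U ∈ (Finset.Icc 1 m).powerset, (M (insert (m + 1) U) : ℝ) * d U) * c_succ_sq m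

/-- The rational combinations of the `d W`, `W ⊆ {1,…,m}`. -/
def IsExpandable (m : ℕ) (x : ℝ) : Prop :=
  ∃ f : Finset ℕ → ℚ, x = ∑ W ∈ (Finset.Icc 1 m).powerset, (f W : ℝ) * d W

lemma IsExpandable.one (m : ℕ) : IsExpandable m 1 := by
  refine ⟨fun W => if W = ∅ then 1 else 0, ?_⟩
  rw [Finset.sum_eq_single_of_mem ∅ (Finset.empty_mem_powerset _) fun W _ hW => by simp [hW]]
  simp [d]

lemma IsExpandable.c_mul {m : ℕ} (k j : ℕ) (hk : j + k = m) {x : ℝ} (hx : IsExpandable m x) :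
    IsExpandable m (c j * x) := by
  induction k generalizing j x with
  | zero =>
    obtain ⟨f, rfl⟩ := hx
    obtain rfl : j = m := hk
    exact ⟨_, c_mul_sum _ f⟩
  | succ k ih =>
    obtain ⟨g, hg⟩ := ih (j + 1) (by omega) (ih (j + 1) (by omega) hx)
    obtain ⟨f, hf⟩ := hx
    refine ⟨fun W => g W - 2 * f W, ?_⟩
    have h : ∑ W ∈ (Finset.Icc 1 m).powerset, ((g W - 2 * f W : ℚ) : ℝ) * d W =
        c (j + 1) * (c (j + 1) * x) - 2 * x := by
      rw [hg, hf, Finset.mul_sum, ← Finset.sum_sub_distrib]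
      refine Finset.sum_congr rfl fun W _ => ?_
      push_cast
      ring
    rw [h]
    linear_combination (-x) * c_succ_sq j

lemma IsExpandable.d_mul {m : ℕ} {A : Finset ℕ} (hA : A ⊆ Finset.Icc 1 m) {x : ℝ}
    (hx : IsExpandable m x) : IsExpandable m (d A * x) := by
  induction A using Finset.induction_on with
  | empty => simpa [d] using hx
  | insert j A hj ih =>
    have hjm := (Finset.mem_Icc.1 (hA (Finset.mem_insert_self j A))).2
    rw [d, Finset.prod_insert hj, mul_assoc]
    exact (ih ((Finset.subset_insert j A).trans hA)).c_mul (m - j) j (by omega)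

/-- recursion for the structure constants `N_{A,B}^W` defined by
`d_A·d_B = ∑_{W ⊆ {1,…,n}} N_{A,B}^W d_W`. -/
theorem stmt_5 (n : ℕ) (hn : 1 ≤ n)
    (N : Finset ℕ → Finset ℕ → Finset ℕ → ℚ)
    (hN : ∀ A B : Finset ℕ, A ⊆ Finset.Icc 1 n → B ⊆ Finset.Icc 1 n →
      d A * d B = ∑ W ∈ (Finset.Icc 1 n).powerset, (N A B W : ℝ) * d W)
    (S T U : Finset ℕ) (hS : S ⊆ Finset.Icc 1 (n - 1)) (hT : T ⊆ Finset.Icc 1 (n - 1))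
    (hU : U ⊆ Finset.Icc 1 (n - 1)) :
    (N S T (insert n U) = 0 ∧ N (insert n S) T U = 0 ∧ N S (insert n T) U = 0 ∧
      N (insert n S) (insert n T) (insert n U) = 0) ∧
    (N (insert n S) T (insert n U) = N S T U ∧ N S (insert n T) (insert n U) = N S T U) ∧
    (∀ hUne : U.Nonempty,
      N (insert n S) (insert n T) U =
        N S T (Finset.Icc (U.max' hUne + 1) (n - 1) ∪ U.erase (U.max' hUne)) +
          2 * ∑ k ∈ Finset.Icc (U.max' hUne) (n - 1),
                N S T (Finset.Icc (k + 1) (n - 1) ∪ U)) ∧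
    (N (insert n S) (insert n T) ∅ =
      2 * ∑ k ∈ Finset.range n, N S T (Finset.Icc (k + 1) (n - 1))) := by
  obtain ⟨m, rfl⟩ : ∃ m, n = m + 1 := ⟨n - 1, by omega⟩
  simp only [Nat.add_sub_cancel] at hS hT hU ⊢
  obtain ⟨M, hM⟩ := ((IsExpandable.one m).d_mul hT).d_mul hS
  rw [mul_one] at hM
  have hsub {A : Finset ℕ} (hA : A ⊆ Finset.Icc 1 m) : A ⊆ Finset.Icc 1 (m + 1) :=
    hA.trans (Finset.Icc_subset_Icc_right (by omega))
  have hins {A : Finset ℕ} (hA : A ⊆ Finset.Icc 1 m) :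
      insert (m + 1) A ⊆ Finset.Icc 1 (m + 1) :=
    Finset.insert_subset (by simp) (hsub hA)
  have hST {V : Finset ℕ} (hV : V ⊆ Finset.Icc 1 m) :
      N S T V = M V ∧ N S T (insert (m + 1) V) = 0 := by
    refine coeff_eq_of_sum_eq (h := fun _ => 0) ?_ hV
    rw [← hN S T (hsub hS) (hsub hT), hM]
    simp
  have hnST {V : Finset ℕ} (hV : V ⊆ Finset.Icc 1 m) :
      N (insert (m + 1) S) T V = 0 ∧ N (insert (m + 1) S) T (insert (m + 1) V) = M V := by
    refine coeff_eq_of_sum_eq (g := fun _ => 0) ?_ hV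
    rw [← hN _ T (hins hS) (hsub hT), d_insert_succ hS, mul_assoc, hM]
    simp
  have hSnT {V : Finset ℕ} (hV : V ⊆ Finset.Icc 1 m) :
      N S (insert (m + 1) T) V = 0 ∧ N S (insert (m + 1) T) (insert (m + 1) V) = M V := by
    refine coeff_eq_of_sum_eq (g := fun _ => 0) ?_ hV
    rw [← hN S _ (hsub hS) (hins hT), d_insert_succ hT, mul_left_comm, hM]
    simp
  have hnSnT {V : Finset ℕ} (hV : V ⊆ Finset.Icc 1 m) :
      N (insert (m + 1) S) (insert (m + 1) T) V = 2 * M V + mulCoeff m M V ∧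
        N (insert (m + 1) S) (insert (m + 1) T) (insert (m + 1) V) = 0 := by
    refine coeff_eq_of_sum_eq (g := fun V => 2 * M V + mulCoeff m M V) (h := fun _ => 0) ?_ hV
    have hsplit : ∑ W ∈ (Finset.Icc 1 m).powerset, ((2 * M W + mulCoeff m M W : ℚ) : ℝ) * d W =
        (2 + c m) * ∑ W ∈ (Finset.Icc 1 m).powerset, (M W : ℝ) * d W := by
      rw [add_mul, c_mul_sum, Finset.mul_sum, ← Finset.sum_add_distrib]
      refine Finset.sum_congr rfl fun W _ => ?_
      push_cast
      ring
    rw [← hN _ _ (hins hS) (hins hT), d_insert_succ hS, d_insert_succ hT, hsplit, ← hM,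
      ← c_succ_sq]
    simp only [Rat.cast_zero, zero_mul, Finset.sum_const_zero, mul_zero, add_zero]
    ring
  have hIcc (k : ℕ) {V : Finset ℕ} (hV : V ⊆ Finset.Icc 1 m) :
      Finset.Icc (k + 1) m ∪ V ⊆ Finset.Icc 1 m :=
    Finset.union_subset (Finset.Icc_subset_Icc_left (by omega)) hV
  have hcoeff {V : Finset ℕ} (hV : V ⊆ Finset.Icc 1 m) :
      N (insert (m + 1) S) (insert (m + 1) T) V =
        (if V.Nonempty then N S T (Finset.Icc (V.sup id + 1) m ∪ V.erase (V.sup id)) else 0) +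
          2 * ∑ k ∈ Finset.Ico (V.sup id) (m + 1), N S T (Finset.Icc (k + 1) m ∪ V) := by
    rw [(hnSnT hV).1, mulCoeff, (hST (hIcc _ ((Finset.erase_subset _ _).trans hV))).1,
      Finset.sum_congr rfl fun k _ => (hST (hIcc k hV)).1,
      Finset.sum_Ico_succ_top (sup_id_le_of_subset_Icc hV)]
    simp only [Finset.Icc_eq_empty_of_lt (Nat.lt_succ_self m), Finset.empty_union]
    ring
  refine ⟨⟨(hST hU).2, (hnST hU).1, (hSnT hU).1, (hnSnT hU).2⟩,
    ⟨(hnST hU).2.trans (hST hU).1.symm, (hSnT hU).2.trans (hST hU).1.symm⟩, fun hUne => ?_, ?_⟩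
  · rw [hcoeff hU, if_pos hUne, Finset.max'_eq_sup', Finset.sup'_eq_sup,
      Finset.Ico_add_one_right_eq_Icc]
  · rw [hcoeff (Finset.empty_subset _)]
    simp
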